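/- For every β ∈ (−1,1), the cubic f_β has exactly one real root ν, and this root satisfies ν ∈ (0,1); indeed f_β(0) = −(1+β) < 0 and f_β(1) = β³ + β² + β + 1 > 0. -/

import Mathlib

/-- The cubic governing the clockwise (Shapley) periodic orbit. -/
noncomputable def fShapley (β Z : ℝ) : ℝ :=
  (3*β^2 + 3*β + 3)*Z^3 + (2*β^3 - 2*β^2 - 5*β - 4)*Z^2 + (-β^3 + 4*β + 3)*Z - (1 + β)

/-- A real cubic with two distinct real roots has nonnegative discriminant. -/
theorem cubic_discr_nonneg_of_two_roots {a b c d x y : ℝ}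
    (hx : a*x^3 + b*x^2 + c*x + d = 0) (hy : a*y^3 + b*y^2 + c*y + d = 0) (hxy : x ≠ y) :
    0 ≤ 18*a*b*c*d - 4*b^3*d + b^2*c^2 - 4*a*c^3 - 27*a^2*d^2 := by
  have hc : c = -(a*(x^2 + x*y + y^2) + b*(x + y)) := by
    apply mul_left_cancel₀ (sub_ne_zero.mpr hxy)
    linear_combination hx - hy
  have hd : d = -(a*x^3 + b*x^2 + c*x) := by linear_combination hx
  have hsq : 18*a*b*c*d - 4*b^3*d + b^2*c^2 - 4*a*c^3 - 27*a^2*d^2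
      = ((2*a*y + a*x + b) * (3*a*x^2 + 2*b*x + c))^2 := by
    rw [hd, hc]; ring
  rw [hsq]
  positivity

theorem fShapley_discr_cofactor_pos {β : ℝ} (h₁ : -1 < β) (h₂ : β < 1) :
    0 < 31 + 63*β + 140*β^2 + 158*β^3 + 198*β^4 + 148*β^5 + 131*β^6 + 63*β^7 + 40*β^8
      + 4*β^9 - 4*β^11 := by
  have hlow : 0 < 31 + 63*β + 33*β^2 := by nlinarith [sq_nonneg (66*β + 63)]
  have hfour : 0 ≤ β^2 * (107 + 158*β + 59*β^2) :=
    mul_nonneg (by positivity) (by nlinarith [sq_nonneg (59*β + 79)])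
  have hsix : 0 ≤ β^4 * (139 + 148*β + 40*β^2) :=
    mul_nonneg (by positivity) (by nlinarith [sq_nonneg (40*β + 74)])
  have height : 0 ≤ β^6 * (91 + 63*β + 36*β^2) :=
    mul_nonneg (by positivity) (by nlinarith [sq_nonneg (72*β + 63)])
  have htop : 0 ≤ β^8 * (4 + 4*β*(1 - β^2)) :=
    mul_nonneg (by positivity) (by nlinarith [mul_pos (sub_pos.mpr h₂) (neg_lt_iff_pos_add.mp h₁)])
  linarith

theorem fShapley_root_unique {β x y : ℝ} (h₁ : -1 < β) (h₂ : β < 1)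
    (hx : fShapley β x = 0) (hy : fShapley β y = 0) : x = y := by
  by_contra hxy
  unfold fShapley at hx hy
  have hdiscr := cubic_discr_nonneg_of_two_roots (a := 3*β^2 + 3*β + 3)
    (b := 2*β^3 - 2*β^2 - 5*β - 4) (c := -β^3 + 4*β + 3) (d := -(1 + β))
    (by linear_combination hx) (by linear_combination hy) hxy
  have hneg := mul_pos (neg_lt_iff_pos_add.mp h₁) (fShapley_discr_cofactor_pos h₁ h₂)
  linarith

/-- For β ∈ (−1,1), f_β(0) = −(1+β) < 0, f_β(1) = β³+β²+β+1 > 0,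
f_β has exactly one real root ν, and this root lies in (0,1). -/
theorem stmt5 (β : ℝ) (hβ : β ∈ Set.Ioo (-1 : ℝ) 1) :
    fShapley β 0 = -(1 + β) ∧ fShapley β 0 < 0 ∧
    fShapley β 1 = β^3 + β^2 + β + 1 ∧ 0 < fShapley β 1 ∧
    (∃! ν : ℝ, fShapley β ν = 0) ∧
    (∀ ν : ℝ, fShapley β ν = 0 → ν ∈ Set.Ioo (0 : ℝ) 1) := by
  obtain ⟨h₁, h₂⟩ := hβ
  have e0 : fShapley β 0 = -(1 + β) := by unfold fShapley; ring
  have e1 : fShapley β 1 = β^3 + β^2 + β + 1 := by unfold fShapley; ring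
  have hneg : fShapley β 0 < 0 := by rw [e0]; linarith
  have hpos : 0 < fShapley β 1 := by
    have : 0 < (1 + β) * (1 + β^2) := mul_pos (by linarith) (by positivity)
    rw [e1]; linarith
  have hcont : ContinuousOn (fShapley β) (Set.Icc 0 1) := by
    unfold fShapley; fun_prop
  obtain ⟨ν, hν, hroot⟩ := intermediate_value_Ioo zero_le_one hcont ⟨hneg, hpos⟩
  refine ⟨e0, hneg, e1, hpos, ⟨ν, hroot, fun y hy => fShapley_root_unique h₁ h₂ hy hroot⟩, ?_⟩
  intro y hy
  rwa [fShapley_root_unique h₁ h₂ hy hroot]
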